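/- Suppose the item set M is partitioned into pairwise disjoint good-minimal meta-goods M_1,…,M_ℓ with pairwise disjoint supporter sets, a set X of subjective goods (singletons), and a set Ẑ of objective chores with 1 ≤ |Ẑ| ≤ n−1, such that for every objective chore c ∈ Ẑ, every agent i, and every subcollection S of X ∪ {M_1,…,M_ℓ}, it holds that u_i({c} ∪ ⋃S) < 0. Then there exists an allocation of M that is both EF1 and envy-freeable. -/

import Mathlib

theorem efx_goods {ι E : Type} [Fintype ι] [DecidableEq ι] [Fintype E] [DecidableEq E]
    [Nonempty ι] (v : ι → E → ℝ) :
    ∀ (k : ℕ) (Y : Finset E), Y.card ≤ k → (∀ e ∈ Y, ∃ i, 0 ≤ v i e) →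
    ∃ f : E → ι, (∀ e ∈ Y, 0 ≤ v (f e) e) ∧
      (∀ τ : Equiv.Perm ι, ∑ e ∈ Y, v (τ (f e)) e ≤ ∑ e ∈ Y, v (f e) e) ∧
      (∀ i j, ∑ e ∈ Y with f e = j, v i e ≤ ∑ e ∈ Y with f e = i, v i e ∨
        ∃ e ∈ Y, f e = j ∧
          ∑ e ∈ Y with f e = j, v i e - v i e ≤ ∑ e ∈ Y with f e = i, v i e) := by
  classical
  intro k
  induction k with
  | zero =>
    intro Y hY _
    have : Y = ∅ := by simpa using hY
    subst this
    exact ⟨fun _ => Classical.arbitrary ι, by simp⟩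
  | succ k ih =>
    intro Y hY hpos
    by_cases hz : ∀ e ∈ Y, ∀ i, v i e ≤ 0
    · have hch : ∀ e, ∃ i, e ∈ Y → 0 ≤ v i e := by
        intro e
        by_cases he : e ∈ Y
        · obtain ⟨i, hi⟩ := hpos e he
          exact ⟨i, fun _ => hi⟩
        · exact ⟨Classical.arbitrary ι, fun h => absurd h he⟩
      choose f hf using hch
      refine ⟨f, hf, ?_, ?_⟩
      · intro τ
        exact Finset.sum_le_sum fun e he => (hz e he _).trans (hf e he)
      · intro i j
        left
        refine le_trans (b := 0) (Finset.sum_nonpos ?_) (Finset.sum_nonneg ?_)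
        · intro e he
          exact hz e (Finset.mem_filter.1 he).1 i
        · intro e he
          obtain ⟨h1, h2⟩ := Finset.mem_filter.1 he
          exact h2 ▸ hf e h1
    · push Not at hz
      obtain ⟨e0, he0, i0, hi0⟩ := hz
      let C : Finset (Finset E × (E → ι)) :=
        Finset.univ.filter fun q => q.1 ⊆ Y ∧ Set.InjOn q.2 (q.1 : Set E)
      have hC0 : (({e0} : Finset E), fun _ : E => i0) ∈ C := by
        simp [C, he0]
      obtain ⟨⟨S, f⟩, hSf, hmax⟩ := Finset.exists_max_image C
        (fun q => ∑ e ∈ q.1, v (q.2 e) e) ⟨_, hC0⟩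
      have hSf' : S ⊆ Y ∧ Set.InjOn f (S : Set E) := by simpa [C] using hSf
      obtain ⟨hSY, hinj⟩ := hSf'
      have hmax' : ∀ (S' : Finset E) (f' : E → ι), S' ⊆ Y → Set.InjOn f' (S' : Set E) →
          ∑ e ∈ S', v (f' e) e ≤ ∑ e ∈ S, v (f e) e := by
        intro S' f' h1 h2
        exact hmax (S', f') (by simp [C, h1, h2])
      have hSne : S.Nonempty := by
        by_contra hne
        rw [Finset.not_nonempty_iff_eq_empty] at hne
        have := hmax' {e0} (fun _ => i0) (by simpa using he0) (by simp)
        rw [hne] at this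
        simp at this
        linarith
      have hS0 : ∀ e ∈ S, 0 ≤ v (f e) e := by
        intro e he
        have := hmax' (S.erase e) f ((Finset.erase_subset _ _).trans hSY)
          (hinj.mono (by simp))
        have h2 := Finset.sum_erase_add S (fun e => v (f e) e) he
        linarith
      have hkey : ∀ e' ∈ Y \ S, ∀ i, v i e' ≤ ∑ e ∈ S with f e = i, v i e := by
        intro e' he' i
        obtain ⟨hY', hS'⟩ := Finset.mem_sdiff.1 he'
        have h := hmax' (insert e' (S.filter fun e => ¬ f e = i)) (Function.update f e' i)
          (by
            intro x hx
            rcases Finset.mem_insert.1 hx with rfl | hx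
            · exact hY'
            · exact hSY (Finset.mem_filter.1 hx).1)
          (by
            intro x hx y hy hxy
            simp only [Finset.coe_insert, Finset.coe_filter, Set.mem_insert_iff,
              Set.mem_ofPred_eq] at hx hy
            by_cases hxe : x = e' <;> by_cases hye : y = e'
            · rw [hxe, hye]
            · rw [hxe, Function.update_self, Function.update_of_ne hye] at hxy
              rcases hy with hy | hy
              · exact absurd hy hye
              · exact absurd hxy.symm hy.2
            · rw [hye, Function.update_self, Function.update_of_ne hxe] at hxy
              rcases hx with hx | hx
              · exact absurd hx hxe
              · exact absurd hxy hx.2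
            · rw [Function.update_of_ne hxe, Function.update_of_ne hye] at hxy
              rcases hx with hx | hx
              · exact absurd hx hxe
              · rcases hy with hy | hy
                · exact absurd hy hye
                · exact hinj hx.1 hy.1 hxy)
        rw [Finset.sum_insert (by simp [hS']), Function.update_self] at h
        have h1 : ∑ e ∈ S with ¬ f e = i, v (Function.update f e' i e) e
            = ∑ e ∈ S with ¬ f e = i, v (f e) e := by
          refine Finset.sum_congr rfl fun e he => ?_
          have : e ≠ e' := by
            rintro rfl
            exact hS' (Finset.mem_filter.1 he).1
          rw [Function.update_of_ne this]
        have h2 := Finset.sum_filter_add_sum_filter_not S (fun e => f e = i)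
          (fun e => v (f e) e)
        have h3 : ∑ e ∈ S with f e = i, v (f e) e = ∑ e ∈ S with f e = i, v i e :=
          Finset.sum_congr rfl fun e he => by rw [(Finset.mem_filter.1 he).2]
        linarith
      have hm0 : ∀ i, 0 ≤ ∑ e ∈ S with f e = i, v i e := by
        intro i
        refine Finset.sum_nonneg fun e he => ?_
        obtain ⟨h1, h2⟩ := Finset.mem_filter.1 he
        exact h2 ▸ hS0 e h1
      have hcard : (Y \ S).card ≤ k := by
        have := Finset.card_sdiff_add_card_eq_card hSY
        have := hSne.card_pos
        omega
      obtain ⟨f', h0', h1', h2'⟩ := ih (Y \ S) hcard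
        (fun e he => hpos e (Finset.mem_sdiff.1 he).1)
      let F : E → ι := fun e => if e ∈ S then f e else f' e
      have hFS : ∀ e ∈ S, F e = f e := fun e he => if_pos he
      have hFS' : ∀ e ∈ Y \ S, F e = f' e := fun e he => if_neg (Finset.mem_sdiff.1 he).2
      have hsplit : ∀ i j, ∑ e ∈ Y with F e = j, v i e
          = ∑ e ∈ Y \ S with f' e = j, v i e + ∑ e ∈ S with f e = j, v i e := by
        intro i j
        simp only [Finset.sum_filter]
        rw [← Finset.sum_sdiff hSY]
        congr 1
        · exact Finset.sum_congr rfl fun e he => by rw [hFS' e he]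
        · exact Finset.sum_congr rfl fun e he => by rw [hFS e he]
      refine ⟨F, ?_, ?_, ?_⟩
      · intro e he
        by_cases heS : e ∈ S
        · rw [hFS e heS]; exact hS0 e heS
        · have := Finset.mem_sdiff.2 ⟨he, heS⟩
          rw [hFS' e this]; exact h0' e this
      · intro τ
        rw [← Finset.sum_sdiff hSY, ← Finset.sum_sdiff hSY]
        refine add_le_add ?_ ?_
        · have := h1' τ
          calc _ = ∑ e ∈ Y \ S, v (τ (f' e)) e :=
                Finset.sum_congr rfl fun e he => by rw [hFS' e he]
            _ ≤ _ := this
            _ = _ := Finset.sum_congr rfl fun e he => by rw [hFS' e he]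
        · have := hmax' S (fun e => τ (f e)) hSY
            (fun x hx y hy hxy => hinj hx hy (τ.injective hxy))
          calc _ = ∑ e ∈ S, v (τ (f e)) e :=
                Finset.sum_congr rfl fun e he => by rw [hFS e he]
            _ ≤ _ := this
            _ = _ := Finset.sum_congr rfl fun e he => by rw [hFS e he]
      · intro i j
        have hle : ∑ e ∈ Y \ S with f' e = j, v i e ≤ ∑ e ∈ Y with F e = i, v i e := by
          rw [hsplit]
          rcases h2' i j with h | ⟨e, he, _, h⟩
          · linarith [hm0 i]
          · linarith [hkey e he i]
        by_cases hj : ∃ e ∈ S, f e = j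
        · obtain ⟨e, he, hej⟩ := hj
          right
          refine ⟨e, hSY he, by rw [hFS e he, hej], ?_⟩
          have : S.filter (fun e => f e = j) = {e} := by
            ext x
            simp only [Finset.mem_filter, Finset.mem_singleton]
            constructor
            · rintro ⟨h1, h2⟩
              exact hinj h1 he (h2.trans hej.symm)
            · rintro rfl
              exact ⟨he, hej⟩
          rw [hsplit i j, this, Finset.sum_singleton]
          linarith
        · left
          have : S.filter (fun e => f e = j) = ∅ := by
            rw [Finset.filter_eq_empty_iff]
            intro e he h
            exact hj ⟨e, he, h⟩
          rw [hsplit i j, this, Finset.sum_empty]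
          linarith

/-- path weight -/
def pathW {ι : Type} (w : ι → ι → ℝ) : List ι → ℝ
  | [] => 0
  | [_] => 0
  | a :: b :: l => w a b + pathW w (b :: l)

theorem pathW_append {ι : Type} (w : ι → ι → ℝ) (x : ι) (l2 : List ι) :
    ∀ l1 : List ι, pathW w (l1 ++ x :: l2) = pathW w (l1 ++ [x]) + pathW w (x :: l2)
  | [] => by simp [pathW]
  | [a] => by simp [pathW]
  | a :: b :: l => by
    have := pathW_append w x l2 (b :: l)
    simp only [List.cons_append, pathW] at this ⊢
    rw [this]; ring

theorem pathW_zip {ι : Type} (w : ι → ι → ℝ) (y : ι) :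
    ∀ (x : ι) (l : List ι),
      pathW w (x :: l ++ [y]) = (List.zipWith w (x :: l) (l ++ [y])).sum
  | x, [] => by simp [pathW]
  | x, b :: l => by
    have := pathW_zip w y b l
    simp only [List.cons_append, pathW] at this ⊢
    rw [this]; simp

theorem cycle_nonpos {ι : Type} [Fintype ι] [DecidableEq ι] (w : ι → ι → ℝ)
    (hd : ∀ i, w i i = 0) (hw : ∀ σ : Equiv.Perm ι, ∑ i, w i (σ i) ≤ 0)
    (x : ι) (l : List ι) (hl : (x :: l).Nodup) : pathW w (x :: l ++ [x]) ≤ 0 := by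
  have hmap : (x :: l).map (List.formPerm (x :: l)) = l ++ [x] := by
    have : l ++ [x] = (x :: l).rotate 1 := by simp
    rw [this]
    apply List.ext_getElem
    · simp
    · intro i h1 h2
      rw [List.getElem_map, List.formPerm_apply_getElem _ hl, List.getElem_rotate]
  have h := hw (List.formPerm (x :: l))
  have h1 : ∑ i, w i (List.formPerm (x :: l) i)
      = ∑ i ∈ (x :: l).toFinset, w i (List.formPerm (x :: l) i) := by
    symm
    apply Finset.sum_subset (Finset.subset_univ _)
    intro i _ hi
    rw [List.formPerm_apply_of_notMem (by simpa using hi), hd]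
  rw [h1, List.sum_toFinset _ hl] at h
  rw [pathW_zip, ← hmap, List.zipWith_map_right]
  simpa [List.zipWith_self] using h

theorem payments_exist {ι : Type} [Fintype ι] [DecidableEq ι] (w : ι → ι → ℝ)
    (hd : ∀ i, w i i = 0) (hw : ∀ σ : Equiv.Perm ι, ∑ i, w i (σ i) ≤ 0) :
    ∃ p : ι → ℝ, (∀ i, 0 ≤ p i) ∧ ∀ i j, w i j + p j ≤ p i := by
  classical
  have hfin : Set.Finite {l : List ι | l.Nodup} :=
    (List.finite_length_le ι (Fintype.card ι)).subset fun l hl => List.Nodup.length_le_card hl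
  have hex : ∀ i, ∃ l : List ι, (i :: l).Nodup ∧
      ∀ l', (i :: l').Nodup → pathW w (i :: l') ≤ pathW w (i :: l) := by
    intro i
    have hf : Set.Finite {l : List ι | (i :: l).Nodup} :=
      hfin.subset fun l hl => (List.nodup_cons.1 hl).2
    obtain ⟨l, hl, hm⟩ := Set.exists_max_image _ (fun l => pathW w (i :: l)) hf
      ⟨[], by simp⟩
    exact ⟨l, hl, fun l' hl' => hm l' hl'⟩
  choose P hP hPm using hex
  refine ⟨fun i => pathW w (i :: P i), fun i => ?_, fun i j => ?_⟩
  · simpa [pathW] using hPm i [] (by simp)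
  · by_cases hi : i ∈ j :: P j
    · obtain ⟨l1, l2, h12⟩ := List.append_of_mem hi
      have hnd := hP j
      have hw2 : w i j + pathW w (j :: P j) = pathW w (i :: (j :: P j)) := by simp [pathW]
      rw [hw2, h12]
      rw [h12] at hnd
      rw [← List.cons_append, pathW_append]
      have hn2 := List.nodup_middle.1 hnd
      have h1 : pathW w (i :: l1 ++ [i]) ≤ 0 := by
        apply cycle_nonpos w hd hw
        rw [← List.cons_append] at hn2
        exact hn2.of_append_left
      have h2 := hPm i l2 hnd.of_append_right
      linarith
    · have := hPm i (j :: P j) (List.nodup_cons.2 ⟨hi, hP j⟩)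
      simpa [pathW] using this

theorem core_alloc {ι I : Type} [Fintype ι] [DecidableEq ι] [Fintype I] [DecidableEq I]
    (u : ι → I → ℝ) (Y : Finset (Finset I)) (Zh : Finset I)
    (hYd : ∀ e ∈ Y, ∀ e' ∈ Y, e ≠ e' → Disjoint e e')
    (hYZ : ∀ e ∈ Y, Disjoint e Zh)
    (hcov : ∀ t, t ∈ Zh ∨ ∃ e ∈ Y, t ∈ e)
    (hsup : ∀ e ∈ Y, ∃ i, 0 ≤ ∑ t ∈ e, u i t)
    (hgm : ∀ e ∈ Y, ∀ i, ∀ g ∈ e, 0 ≤ u i g → ∑ t ∈ e, u i t ≤ u i g)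
    (hne : Zh.Nonempty) (hcard : Zh.card ≤ Fintype.card ι)
    (hP3 : ∀ c ∈ Zh, ∀ i, ∀ T ⊆ Y, u i c + ∑ e ∈ T, ∑ t ∈ e, u i t < 0) :
    ∃ A : ι → Finset I,
      (∀ i j, i ≠ j → Disjoint (A i) (A j)) ∧
      (Finset.univ.biUnion A = Finset.univ) ∧
      (∀ i j : ι,
        (∑ t ∈ A i, u i t) ≥ (∑ t ∈ A j, u i t) ∨
          ∃ t ∈ A i ∪ A j,
            (∑ s ∈ (A i).erase t, u i s) ≥ ∑ s ∈ (A j).erase t, u i s) ∧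
      (∃ p : ι → ℝ, (∀ i, 0 ≤ p i) ∧
        ∀ i j : ι, (∑ t ∈ A i, u i t) + p i ≥ (∑ t ∈ A j, u i t) + p j) := by
  classical
  obtain ⟨v, hv⟩ : ∃ v : ι → Finset I → ℝ, ∀ i e, v i e = ∑ t ∈ e, u i t :=
    ⟨fun i e => ∑ t ∈ e, u i t, fun _ _ => rfl⟩
  simp only [← hv] at hsup hgm hP3
  have hιne : Nonempty ι := by
    rw [← Fintype.card_pos_iff]
    exact hne.card_pos.trans_le hcard
  -- the sup of nonnegative parts
  obtain ⟨w, hw0, hwle, hwex⟩ : ∃ w : Finset ι → Finset I → ℝ, (∀ K e, 0 ≤ w K e) ∧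
      (∀ K e, ∀ j ∈ K, v j e ≤ w K e) ∧
      (∀ K e, (∃ j ∈ K, 0 ≤ v j e) → ∃ j ∈ K, v j e = w K e) ∧
      (∀ K e, (∀ j ∈ K, v j e < 0) → w K e = 0) := by
    have : ∀ (K : Finset ι) (e : Finset I), ∃ x : ℝ, 0 ≤ x ∧ (∀ j ∈ K, v j e ≤ x) ∧
      ((∃ j ∈ K, 0 ≤ v j e) → ∃ j ∈ K, v j e = x) ∧
      ((∀ j ∈ K, v j e < 0) → x = 0) := by
      intro K e
      by_cases h : ∃ j ∈ K, 0 ≤ v j e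
      · obtain ⟨j0, hj0, hj0'⟩ := h
        obtain ⟨j, hj, hm⟩ := Finset.exists_max_image K (fun j => v j e) ⟨j0, hj0⟩
        exact ⟨v j e, hj0'.trans (hm j0 hj0), hm, fun _ => ⟨j, hj, rfl⟩,
          fun h => absurd (h j0 hj0) (not_lt.2 hj0')⟩
      · refine ⟨0, le_rfl, ?_, fun h' => absurd h' h, fun _ => rfl⟩
        push Not at h
        exact fun j hj => (h j hj).le
    choose w h1 h2 h3 h4 using this
    exact ⟨w, h1, h2, h3, h4⟩
  obtain ⟨hwex, hwz⟩ := hwex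
  -- optimal choice of chore assignment
  obtain ⟨h, hinj, hmax⟩ : ∃ h : I → ι, Set.InjOn h (Zh : Set I) ∧
      ∀ h' : I → ι, Set.InjOn h' (Zh : Set I) →
        ∑ c ∈ Zh, u (h' c) c + ∑ e ∈ Y, w (Zh.image h') e ≤
        ∑ c ∈ Zh, u (h c) c + ∑ e ∈ Y, w (Zh.image h) e := by
    have hex : ∃ h : I → ι, Set.InjOn h (Zh : Set I) := by
      have hc : Fintype.card Zh ≤ Fintype.card ι := by simpa using hcard
      obtain ⟨φ⟩ := Function.Embedding.nonempty_of_card_le hc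
      refine ⟨fun t => if ht : t ∈ Zh then φ ⟨t, ht⟩ else Classical.arbitrary ι, ?_⟩
      intro x hx y hy hxy
      have hx' : x ∈ Zh := hx
      have hy' : y ∈ Zh := hy
      simp only [hx', hy', dif_pos] at hxy
      simpa using φ.injective hxy
    obtain ⟨h0, hh0⟩ := hex
    obtain ⟨h, hh, hm⟩ := Finset.exists_max_image
      (Finset.univ.filter fun h : I → ι => Set.InjOn h (Zh : Set I))
      (fun h => ∑ c ∈ Zh, u (h c) c + ∑ e ∈ Y, w (Zh.image h) e) ⟨h0, by simpa using hh0⟩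
    exact ⟨h, by simpa using hh, fun h' hh' => hm h' (by simpa using hh')⟩
  obtain ⟨K, hK⟩ : ∃ K, K = Zh.image h := ⟨_, rfl⟩
  have hKmem : ∀ i, i ∈ K ↔ ∃ c ∈ Zh, h c = i := by intro i; simp [hK]
  have hg : ∀ e, ∃ j, (∃ j ∈ K, 0 ≤ v j e) → j ∈ K ∧ v j e = w K e := by
    intro e
    by_cases he : ∃ j ∈ K, 0 ≤ v j e
    · obtain ⟨j, hj⟩ := hwex K e he
      exact ⟨j, fun _ => hj⟩
    · exact ⟨Classical.arbitrary ι, fun h => absurd h he⟩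
  choose g hg using hg
  obtain ⟨Q, hQ⟩ : ∃ Q : Finset I → Prop, ∀ e, Q e ↔ ∃ j ∈ K, 0 ≤ v j e :=
    ⟨_, fun _ => Iff.rfl⟩
  simp only [← hQ] at hg
  have hnQ : ∀ e, ¬ Q e → ∀ j ∈ K, v j e < 0 := by
    intro e he
    rw [hQ] at he
    push Not at he
    exact he
  obtain ⟨f, hf0, hf1, hf2⟩ := efx_goods v _ (Y.filter fun e => ¬ Q e) le_rfl
    (fun e he => hsup e (Finset.mem_filter.1 he).1)
  have hfK : ∀ e ∈ Y, ¬ Q e → f e ∉ K := by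
    intro e he hq hk
    exact absurd (hf0 e (Finset.mem_filter.2 ⟨he, hq⟩)) (not_le.2 (hnQ e hq _ hk))
  obtain ⟨F, hFQ, hFn⟩ : ∃ F : Finset I → ι, (∀ e, Q e → F e = g e) ∧
      (∀ e, ¬ Q e → F e = f e) :=
    ⟨fun e => if Q e then g e else f e, fun e he => if_pos he, fun e he => if_neg he⟩
  have hF0 : ∀ e ∈ Y, 0 ≤ v (F e) e := by
    intro e he
    by_cases hq : Q e
    · rw [hFQ e hq, (hg e hq).2]; exact hw0 _ _
    · rw [hFn e hq]; exact hf0 e (Finset.mem_filter.2 ⟨he, hq⟩)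
  have hFKQ : ∀ e ∈ Y, (F e ∈ K ↔ Q e) := by
    intro e he
    by_cases hq : Q e
    · simp only [hFQ e hq, hq, (hg e hq).1]
    · simp only [hFn e hq, hq, hfK e he hq]
  -- the allocation
  obtain ⟨A, hA⟩ : ∃ A : ι → Finset I, ∀ i, A i =
      (Zh.filter fun c => h c = i) ∪ (Y.filter fun e => F e = i).biUnion id := ⟨_, fun _ => rfl⟩
  have hmemA : ∀ i t, t ∈ A i ↔ (t ∈ Zh ∧ h t = i) ∨ ∃ e ∈ Y, F e = i ∧ t ∈ e := by
    intro i t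
    rw [hA]
    simp [and_assoc]
  have hAd : ∀ i j t, t ∈ A i → t ∈ A j → i = j := by
    intro i j t h1 h2
    rw [hmemA] at h1 h2
    rcases h1 with ⟨h1, h1'⟩ | ⟨e, he, hei, hte⟩ <;>
      rcases h2 with ⟨h2, h2'⟩ | ⟨e', he', hei', hte'⟩
    · exact h1'.symm.trans h2'
    · exact absurd h1 (Finset.disjoint_left.1 (hYZ e' he') hte')
    · exact absurd h2 (Finset.disjoint_left.1 (hYZ e he) hte)
    · by_cases hee : e = e'
      · subst hee; exact hei.symm.trans hei'
      · exact absurd hte' (Finset.disjoint_left.1 (hYd e he e' he' hee) hte)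
  have hV : ∀ i j, ∑ t ∈ A j, u i t =
      ∑ c ∈ Zh with h c = j, u i c + ∑ e ∈ Y with F e = j, v i e := by
    intro i j
    rw [hA, Finset.sum_union, Finset.sum_biUnion]
    · simp only [hv, id]
    · intro e he e' he' hee
      simp only [Finset.coe_filter, Set.mem_ofPred_eq] at he he'
      exact hYd e he.1 e' he'.1 hee
    · rw [Finset.disjoint_left]
      intro t ht ht'
      simp only [Finset.mem_filter, Finset.mem_biUnion, id] at ht ht'
      obtain ⟨e, ⟨he, _⟩, hte⟩ := ht'
      exact Finset.disjoint_left.1 (hYZ e he) hte ht.1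
  have hZK : ∀ c ∈ Zh, Zh.filter (fun c' => h c' = h c) = {c} := by
    intro c hc
    ext x
    simp only [Finset.mem_filter, Finset.mem_singleton]
    constructor
    · rintro ⟨h1, h2⟩
      exact hinj h1 hc h2
    · rintro rfl
      exact ⟨hc, rfl⟩
  have hVK : ∀ i, ∀ c ∈ Zh, ∑ t ∈ A (h c), u i t =
      u i c + ∑ e ∈ Y with F e = h c, v i e := by
    intro i c hc
    rw [hV, hZK c hc, Finset.sum_singleton]
  have hVKneg : ∀ i, ∀ j ∈ K, ∑ t ∈ A j, u i t < 0 := by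
    intro i j hj
    obtain ⟨c, hc, rfl⟩ := (hKmem j).1 hj
    rw [hVK i c hc]
    exact hP3 c hc i _ (Finset.filter_subset _ _)
  have hVnK : ∀ i, ∀ j, j ∉ K → ∑ t ∈ A j, u i t =
      ∑ e ∈ Y.filter (fun e => ¬ Q e) with f e = j, v i e := by
    intro i j hj
    have h1 : Zh.filter (fun c => h c = j) = ∅ := by
      rw [Finset.filter_eq_empty_iff]
      intro c hc hcj
      exact hj ((hKmem j).2 ⟨c, hc, hcj⟩)
    rw [hV, h1, Finset.sum_empty, zero_add]
    refine Finset.sum_congr ?_ fun _ _ => rfl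
    ext e
    simp only [Finset.mem_filter]
    constructor
    · rintro ⟨he, rfl⟩
      have hq : ¬ Q e := fun hq => hj ((hFKQ e he).2 hq)
      exact ⟨⟨he, hq⟩, (hFn e hq).symm⟩
    · rintro ⟨⟨he, hq⟩, rfl⟩
      exact ⟨he, hFn e hq⟩
  have hEnt0 : ∀ i, 0 ≤ ∑ e ∈ Y with F e = i, v i e := by
    intro i
    refine Finset.sum_nonneg fun e he => ?_
    obtain ⟨h1, h2⟩ := Finset.mem_filter.1 he
    exact h2 ▸ hF0 e h1
  have hnK0 : ∀ i, i ∉ K → 0 ≤ ∑ t ∈ A i, u i t := by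
    intro i hi
    rw [hVnK i i hi]
    refine Finset.sum_nonneg fun e he => ?_
    obtain ⟨h1, h2⟩ := Finset.mem_filter.1 he
    exact h2 ▸ hf0 e h1
  refine ⟨A, ?_, ?_, ?_, ?_⟩
  · intro i j hij
    rw [Finset.disjoint_left]
    exact fun t h1 h2 => hij (hAd i j t h1 h2)
  · ext t
    simp only [Finset.mem_biUnion, Finset.mem_univ, true_and, iff_true]
    rcases hcov t with ht | ⟨e, he, hte⟩
    · exact ⟨h t, (hmemA _ _).2 (Or.inl ⟨ht, rfl⟩)⟩
    · exact ⟨F e, (hmemA _ _).2 (Or.inr ⟨e, he, rfl, hte⟩)⟩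
  · intro i j
    by_cases hij : i = j
    · left; rw [hij]
    by_cases hi : i ∈ K
    · right
      obtain ⟨c, hc, hci⟩ := (hKmem i).1 hi
      have hcA : c ∈ A i := (hmemA _ _).2 (Or.inl ⟨hc, hci⟩)
      have hcj : c ∉ A j := fun hcj => hij (hAd i j c hcA hcj)
      refine ⟨c, Finset.mem_union_left _ hcA, ?_⟩
      rw [Finset.erase_eq_of_notMem hcj]
      have h1 := Finset.sum_erase_add (A i) (u i) hcA
      have h2 := hVK i c hc
      rw [hci] at h2
      have h3 := hEnt0 i
      have h4 : ∑ t ∈ A j, u i t ≤ 0 := by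
        by_cases hj : j ∈ K
        · exact (hVKneg i j hj).le
        · rw [hVnK i j hj]
          refine Finset.sum_nonpos fun e he => ?_
          exact (hnQ e (Finset.mem_filter.1 (Finset.mem_filter.1 he).1).2 i hi).le
      linarith
    · by_cases hj : j ∈ K
      · left
        linarith [hVKneg i j hj, hnK0 i hi]
      · have e1 := hVnK i i hi
        have e2 := hVnK i j hj
        rcases hf2 i j with h2 | ⟨e, he, hej, h2⟩
        · left; rw [e1, e2]; exact h2
        · rw [← e1, ← e2] at h2
          by_cases hve : v i e ≤ 0
          · left; linarith
          · right
            push Not at hve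
            obtain ⟨x, hx, hux⟩ : ∃ x ∈ e, 0 < u i x := by
              by_contra hcon
              push Not at hcon
              have := Finset.sum_nonpos hcon
              rw [← hv] at this
              linarith
            obtain ⟨heY, heQ⟩ := Finset.mem_filter.1 he
            have hxj : x ∈ A j :=
              (hmemA _ _).2 (Or.inr ⟨e, heY, (hFn e heQ).trans hej, hx⟩)
            have hxi : x ∉ A i := fun hxi => hij (hAd i j x hxi hxj)
            refine ⟨x, Finset.mem_union_right _ hxj, ?_⟩
            rw [Finset.erase_eq_of_notMem hxi]
            have h5 := Finset.sum_erase_add (A j) (u i) hxj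
            have h6 := hgm e heY i x hx hux.le
            linarith
  · -- envy-freeability
    have hperm : ∀ σ : Equiv.Perm ι,
        ∑ i, ∑ t ∈ A (σ i), u i t =
          ∑ c ∈ Zh, u (σ.symm (h c)) c + ∑ e ∈ Y, v (σ.symm (F e)) e := by
      intro σ
      simp only [hV, Finset.sum_add_distrib, Finset.sum_filter]
      rw [Finset.sum_comm, Finset.sum_comm (s := Finset.univ) (t := Y)]
      congr 1
      · refine Finset.sum_congr rfl fun c _ => ?_
        rw [Finset.sum_eq_single (σ.symm (h c))]
        · simp
        · intro b _ hb
          rw [if_neg]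
          intro hh
          exact hb (by rw [hh]; simp)
        · simp
      · refine Finset.sum_congr rfl fun c _ => ?_
        rw [Finset.sum_eq_single (σ.symm (F c))]
        · simp
        · intro b _ hb
          rw [if_neg]
          intro hh
          exact hb (by rw [hh]; simp)
        · simp
    have hopt : ∀ τ : Equiv.Perm ι,
        ∑ c ∈ Zh, u (τ (h c)) c + ∑ e ∈ Y, v (τ (F e)) e ≤
        ∑ c ∈ Zh, u (h c) c + ∑ e ∈ Y, v (F e) e := by
      intro τ
      have m := hmax (fun c => τ (h c)) (fun x hx y hy hxy => hinj hx hy (τ.injective hxy))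
      rw [← hK] at m
      have s1 := Finset.sum_filter_add_sum_filter_not Y Q (fun e => v (τ (F e)) e)
      have s2 := Finset.sum_filter_add_sum_filter_not Y Q (fun e => v (F e) e)
      have s3 := Finset.sum_filter_add_sum_filter_not Y Q (fun e => w K e)
      have s4 : ∑ e ∈ Y with ¬ Q e, w K e = 0 :=
        Finset.sum_eq_zero fun e he => hwz K e (hnQ e (Finset.mem_filter.1 he).2)
      have s5 : ∑ e ∈ Y with Q e, v (F e) e = ∑ e ∈ Y with Q e, w K e := by
        refine Finset.sum_congr rfl fun e he => ?_
        have hq := (Finset.mem_filter.1 he).2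
        rw [hFQ e hq, (hg e hq).2]
      have s6 : ∑ e ∈ Y with ¬ Q e, v (τ (F e)) e ≤ ∑ e ∈ Y with ¬ Q e, v (F e) e := by
        have e1 : ∑ e ∈ Y with ¬ Q e, v (τ (F e)) e = ∑ e ∈ Y with ¬ Q e, v (τ (f e)) e :=
          Finset.sum_congr rfl fun e he => by rw [hFn e (Finset.mem_filter.1 he).2]
        have e2 : ∑ e ∈ Y with ¬ Q e, v (F e) e = ∑ e ∈ Y with ¬ Q e, v (f e) e :=
          Finset.sum_congr rfl fun e he => by rw [hFn e (Finset.mem_filter.1 he).2]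
        rw [e1, e2]
        exact hf1 τ
      have s7 : ∑ e ∈ Y with Q e, v (τ (F e)) e ≤
          ∑ e ∈ Y, w (Zh.image fun c => τ (h c)) e := by
        refine le_trans (Finset.sum_le_sum fun e he => ?_)
          (Finset.sum_le_sum_of_subset_of_nonneg (Finset.filter_subset Q Y)
            fun e _ _ => hw0 _ _)
        have hq := (Finset.mem_filter.1 he).2
        apply hwle
        obtain ⟨c, hc, hcg⟩ := (hKmem _).1 (hg e hq).1
        rw [hFQ e hq, ← hcg]
        exact Finset.mem_image.2 ⟨c, hc, rfl⟩
      linarith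
    obtain ⟨p, hp0, hp⟩ := payments_exist
      (fun i j => ∑ t ∈ A j, u i t - ∑ t ∈ A i, u i t) (fun i => by simp) (by
        intro σ
        rw [Finset.sum_sub_distrib]
        have h1 := hperm σ
        have h2 := hperm 1
        have h3 := hopt σ.symm
        simp only [Equiv.Perm.coe_one, id, Equiv.Perm.one_symm] at h2
        linarith)
    refine ⟨p, hp0, fun i j => ?_⟩
    have := hp i j
    linarith

/-- Case II.2: If the item set is partitioned into pairwise disjoint
good-minimal meta-goods `M_1, …, M_ℓ` (with pairwise disjoint supporter sets), a set `X` of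
subjective goods, and a set `Ẑ` of objective chores with `1 ≤ |Ẑ| ≤ n − 1`, such that for
every `c ∈ Ẑ`, every agent `i`, and every subcollection `S` of `X ∪ {M_1, …, M_ℓ}` one has
`u_i({c} ∪ ⋃S) < 0`, then an EF1 and envy-freeable allocation of the items exists. -/
theorem ef1_envy_freeable_case_few_chores
    (n : ℕ) (I : Type) [Fintype I] [DecidableEq I]
    (u : Fin n → I → ℝ)
    (ℓ : ℕ) (Ms : Fin ℓ → Finset I) (X Zh : Finset I)
    -- each M_j is a nonempty meta-good
    (hMs_ne : ∀ j, (Ms j).Nonempty)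
    (hMs_meta : ∀ j, ∃ i : Fin n, 0 ≤ ∑ t ∈ Ms j, u i t)
    -- the M_j, X, Ẑ are pairwise disjoint and partition the item set
    (hMs_disj : ∀ j k, j ≠ k → Disjoint (Ms j) (Ms k))
    (hMsX_disj : ∀ j, Disjoint (Ms j) X)
    (hMsZ_disj : ∀ j, Disjoint (Ms j) Zh)
    (hXZ_disj : Disjoint X Zh)
    (hcover : Finset.univ.biUnion Ms ∪ X ∪ Zh = Finset.univ)
    -- X consists of subjective goods
    (hX_goods : ∀ g ∈ X, ∃ i : Fin n, 0 ≤ u i g)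
    -- Ẑ consists of objective chores, with 1 ≤ |Ẑ| ≤ n − 1
    (hZ_chores : ∀ c ∈ Zh, ∀ i : Fin n, u i c < 0)
    (hZ_card : 1 ≤ Zh.card ∧ Zh.card ≤ n - 1)
    -- supporter sets are pairwise disjoint
    (hSupp : ∀ j k, j ≠ k → ∀ i : Fin n,
      0 ≤ (∑ t ∈ Ms j, u i t) → ¬ (0 ≤ ∑ t ∈ Ms k, u i t))
    -- each M_j is good-minimal
    (hGoodMin : ∀ j, ∀ (r : Fin n) (g : I), g ∈ Ms j → 0 ≤ u r g →
      (∑ t ∈ (Ms j).erase g, u r t) ≤ 0)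
    -- for every chore c ∈ Ẑ, agent i, and subcollection S of X ∪ {M_1, …, M_ℓ},
    -- u_i({c} ∪ ⋃S) < 0
    (hP3 : ∀ c ∈ Zh, ∀ i : Fin n, ∀ (G : Finset I) (T : Finset (Fin ℓ)), G ⊆ X →
      (∑ t ∈ insert c (G ∪ T.biUnion Ms), u i t) < 0) :
    ∃ A : Fin n → Finset I,
      (∀ i j, i ≠ j → Disjoint (A i) (A j)) ∧
      (Finset.univ.biUnion A = Finset.univ) ∧
      -- EF1
      (∀ i j : Fin n,
        (∑ t ∈ A i, u i t) ≥ (∑ t ∈ A j, u i t) ∨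
          ∃ t ∈ A i ∪ A j,
            (∑ s ∈ (A i).erase t, u i s) ≥ ∑ s ∈ (A j).erase t, u i s) ∧
      -- envy-freeable
      (∃ p : Fin n → ℝ, (∀ i, 0 ≤ p i) ∧
        ∀ i j : Fin n, (∑ t ∈ A i, u i t) + p i ≥ (∑ t ∈ A j, u i t) + p j) := by
  classical
  obtain ⟨Y, hY⟩ : ∃ Y : Finset (Finset I), ∀ e, e ∈ Y ↔
      (∃ x ∈ X, {x} = e) ∨ ∃ j, Ms j = e :=
    ⟨X.image (fun x => {x}) ∪ Finset.univ.image Ms, fun e => by simp⟩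
  have hYd : ∀ e ∈ Y, ∀ e' ∈ Y, e ≠ e' → Disjoint e e' := by
    intro e he e' he' hne
    rcases (hY e).1 he with ⟨x, hx, rfl⟩ | ⟨j, rfl⟩ <;>
      rcases (hY e').1 he' with ⟨y, hy, rfl⟩ | ⟨k, rfl⟩
    · simpa using hne
    · exact ((hMsX_disj k).mono_right (by simpa using hx)).symm
    · exact (hMsX_disj j).mono_right (by simpa using hy)
    · exact hMs_disj j k (fun h => hne (by rw [h]))
  have hYZ : ∀ e ∈ Y, Disjoint e Zh := by
    intro e he
    rcases (hY e).1 he with ⟨x, hx, rfl⟩ | ⟨j, rfl⟩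
    · exact hXZ_disj.mono_left (by simpa using hx)
    · exact hMsZ_disj j
  refine core_alloc u Y Zh hYd hYZ ?_ ?_ ?_ (Finset.card_pos.1 hZ_card.1)
    (by rw [Fintype.card_fin]; omega) ?_
  · intro t
    have ht : t ∈ Finset.univ.biUnion Ms ∪ X ∪ Zh := by rw [hcover]; exact Finset.mem_univ t
    simp only [Finset.mem_union, Finset.mem_biUnion, Finset.mem_univ, true_and] at ht
    rcases ht with (⟨j, hj⟩ | hx) | hz
    · exact Or.inr ⟨Ms j, (hY _).2 (Or.inr ⟨j, rfl⟩), hj⟩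
    · exact Or.inr ⟨{t}, (hY _).2 (Or.inl ⟨t, hx, rfl⟩), by simp⟩
    · exact Or.inl hz
  · intro e he
    rcases (hY e).1 he with ⟨x, hx, rfl⟩ | ⟨j, rfl⟩
    · simpa using hX_goods x hx
    · exact hMs_meta j
  · intro e he i g hg hpos
    rcases (hY e).1 he with ⟨x, hx, rfl⟩ | ⟨j, rfl⟩
    · rw [Finset.mem_singleton] at hg
      simp [hg]
    · have h1 := hGoodMin j i g hg hpos
      have h2 := Finset.sum_erase_add (Ms j) (u i) hg
      linarith
  · intro c hc i T hT
    have h := hP3 c hc i (X.filter fun x => {x} ∈ T) (Finset.univ.filter fun j => Ms j ∈ T)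
      (Finset.filter_subset _ _)
    have hU : (X.filter fun x => {x} ∈ T) ∪ (Finset.univ.filter fun j => Ms j ∈ T).biUnion Ms
        = T.biUnion id := by
      ext t
      simp only [Finset.mem_union, Finset.mem_filter, Finset.mem_biUnion, Finset.mem_univ,
        true_and, id]
      constructor
      · rintro (⟨_, ht⟩ | ⟨j, hj, ht⟩)
        · exact ⟨{t}, ht, by simp⟩
        · exact ⟨_, hj, ht⟩
      · rintro ⟨e, he, hte⟩
        rcases (hY e).1 (hT he) with ⟨x, hx, rfl⟩ | ⟨j, rfl⟩
        · rw [Finset.mem_singleton] at hte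
          subst hte
          exact Or.inl ⟨hx, he⟩
        · exact Or.inr ⟨j, he, hte⟩
    rw [hU, Finset.sum_insert, Finset.sum_biUnion] at h
    · exact h
    · intro e he e' he' hne
      exact hYd e (hT he) e' (hT he') hne
    · intro hcm
      obtain ⟨e, he, hce⟩ := Finset.mem_biUnion.1 hcm
      exact Finset.disjoint_left.1 (hYZ e (hT he)) hce hc
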